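/- Let k ≥ 2 be a natural number and let η, β be real numbers with 0 < β < 1. If both strict inequalities (1−η)·β > η·β·(1/(k−1)) and (1−η)·(1−β) + η·β·(1/(k−1)) > (1−η)·β hold, then η < (k−1)/k and β < (1−η)/(2 − 2η − η/(k−1)), where additionally 0 < η < 1 is assumed. (Theorem 1, combined statement: learnability of the main pattern under symmetric noise with reverse samples forces both the pollution-rate bound and the selection-rate bound.) -/

import Mathlib

/-- Theorem 1, combined statement: learnability of the main pattern under symmetric
noise with reverse samples forces both the pollution-rate bound `η < (k-1)/k` and the
selection-rate bound `β < (1-η)/(2 - 2η - η/(k-1))`. -/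
theorem symmetric_combined {k : ℕ} (hk : 2 ≤ k) {η β : ℝ}
    (hη0 : 0 < η) (hη1 : η < 1) (hβ0 : 0 < β) (hβ1 : β < 1)
    (h1 : (1 - η) * β > η * β * (1 / ((k : ℝ) - 1)))
    (h2 : (1 - η) * (1 - β) + η * β * (1 / ((k : ℝ) - 1)) > (1 - η) * β) :
    η < ((k : ℝ) - 1) / k ∧ β < (1 - η) / (2 - 2 * η - η / ((k : ℝ) - 1)) := by
  have hk' : (2 : ℝ) ≤ k := by exact_mod_cast hk
  have hc : (0 : ℝ) < (k : ℝ) - 1 := by linarith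
  -- Dividing the first inequality by `β` leaves a bound on `η` alone; it is also what
  -- makes the denominator `2 (1 - η) - η / (k - 1)` positive.
  have h3 : η / ((k : ℝ) - 1) < 1 - η := by
    refine lt_of_mul_lt_mul_right ?_ hβ0.le
    calc η / ((k : ℝ) - 1) * β = η * β * (1 / ((k : ℝ) - 1)) := by ring
      _ < (1 - η) * β := h1
  constructor
  · rw [div_lt_iff₀ hc] at h3
    rw [lt_div_iff₀ (by linarith)]
    linarith
  · have hD : 0 < 2 - 2 * η - η / ((k : ℝ) - 1) := by linarith
    rw [lt_div_iff₀ hD]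
    have h4 : η * β * (1 / ((k : ℝ) - 1)) = β * (η / ((k : ℝ) - 1)) := by ring
    rw [h4] at h2
    linarith
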